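/- arXiv:1701.09017 — 2 statements merged into one kernel-verified Lean document; each statement's English description precedes it below -/
import Mathlib

section
/- The group ⟨s, t | s t s t s = t s t s t, s^3 = 1, t^3 = 1⟩ is a finite group of order 360. -/
/-- Relators of the complex reflection group `G₂₀ = ⟨s, t | s t s t s = t s t s t, s³ = t³ = 1⟩`,
with `true ↦ s`, `false ↦ t`. -/
def relG20 : Set (FreeGroup Bool) :=
  {FreeGroup.of true * FreeGroup.of false * FreeGroup.of true * FreeGroup.of false *
      FreeGroup.of true *
    (FreeGroup.of false * FreeGroup.of true * FreeGroup.of false * FreeGroup.of true *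
      FreeGroup.of false)⁻¹,
   FreeGroup.of true ^ 3, FreeGroup.of false ^ 3}

/-- The group `G₂₀`. -/
abbrev G20 := PresentedGroup relG20

/-- The generator `s` of `G₂₀`. -/
def gs : G20 := PresentedGroup.of true

/-- The generator `t` of `G₂₀`. -/
def gt : G20 := PresentedGroup.of false

/-!
Put `c = s t`. The braid relation becomes `s c² s = c³`, so that `c⁵` is central. Modulo `c⁵` the
group is the rotation group of the icosahedron: `c` is a rotation of order five and the cosets of
`⟨c⟩` are the vertices. The element `b = s c s c³ s` satisfies `b² = c⁵` and `b c² = c⁸ b`; modulo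
`c⁵` it is a half-turn which exchanges the two vertices on the axis of `c`. Since `c¹⁰` is central,
the second relation gives `c¹⁰ = c⁴⁰`, hence `c³⁰ = 1`. The six cosets of `⟨b, c⟩` represented by
`1` and `cᵏ s` are permuted by `s` and `c`, so the order is at most `12 * 30`; a homomorphism to
`SL₂(𝔽₅) × ℤ/3` shows that no collapse occurs.
-/

namespace G20

variable {G : Type*} [Group G] {s c : G}

theorem exists_eq_fin_add_mul (n : ℕ) [NeZero n] (k : ℤ) :
    ∃ (r : Fin n) (q : ℤ), k = (r : ℕ) + n * q := by
  have hn : (n : ℤ) ≠ 0 := Nat.cast_ne_zero.mpr (NeZero.ne n)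
  have hr := Int.emod_nonneg k hn
  have hlt := Int.emod_lt_of_pos k (by lia : (0 : ℤ) < n)
  refine ⟨⟨(k % n).toNat, by lia⟩, k / n, ?_⟩
  rw [Int.toNat_of_nonneg hr, Int.emod_add_mul_ediv]

theorem mk_injective_of_conj_injective {ι : Type*} {f : ι → G}
    (hf : Function.Injective fun x ↦ f x * c * (f x)⁻¹) :
    Function.Injective fun x ↦ (f x : G ⧸ Subgroup.zpowers c) := by
  intro x y hxy
  obtain ⟨n, hn : c ^ n = (f x)⁻¹ * f y⟩ := QuotientGroup.eq.mp hxy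
  have hy : f y = f x * c ^ n := inv_mul_eq_iff_eq_mul.mp hn.symm
  refine hf ?_
  simp only [hy]
  group

section Relations

theorem commute_pow_five (h : s * c ^ 2 * s = c ^ 3) : Commute (c ^ 5) s :=
  calc c ^ 5 * s = c ^ 3 * c ^ 2 * s := by group
    _ = s * c ^ 2 * (s * c ^ 2 * s) := by rw [← h]; group
    _ = s * c ^ 5 := by rw [h]; group

theorem sq_mul_pow_three (hs : s ^ 3 = 1) (h : s * c ^ 2 * s = c ^ 3) :
    s ^ 2 * c ^ 3 = c ^ 2 * s :=
  calc s ^ 2 * c ^ 3 = s ^ 3 * c ^ 2 * s := by rw [← h]; group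
    _ = c ^ 2 * s := by rw [hs, one_mul]

theorem pow_three_mul_sq (hs : s ^ 3 = 1) (h : s * c ^ 2 * s = c ^ 3) :
    c ^ 3 * s ^ 2 = s * c ^ 2 :=
  calc c ^ 3 * s ^ 2 = s * c ^ 2 * s ^ 3 := by rw [← h]; group
    _ = s * c ^ 2 := by rw [hs, mul_one]

theorem mul_pow_four_mul (hs : s ^ 3 = 1) (h : s * c ^ 2 * s = c ^ 3) :
    s * c ^ 4 * s = c ^ 3 * s * c ^ 3 :=
  calc s * c ^ 4 * s = s * c ^ 2 * (c ^ 2 * s) := by group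
    _ = c ^ 3 * s ^ 2 * (s ^ 2 * c ^ 3) := by
        rw [← pow_three_mul_sq hs h, ← sq_mul_pow_three hs h]
    _ = c ^ 3 * s ^ 3 * s * c ^ 3 := by group
    _ = c ^ 3 * s * c ^ 3 := by rw [hs, mul_one]

theorem mul_pow_three_mul_mul_pow_three (hs : s ^ 3 = 1) (h : s * c ^ 2 * s = c ^ 3) :
    s * c ^ 3 * s * c ^ 3 = c ^ 2 * s * c * s :=
  calc s * c ^ 3 * s * c ^ 3 = s * (c ^ 3 * s * c ^ 3) := by group
    _ = s * (s * c ^ 4 * s) := by rw [mul_pow_four_mul hs h]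
    _ = s ^ 2 * c ^ 3 * c * s := by rw [pow_two]; group
    _ = c ^ 2 * s * c * s := by rw [sq_mul_pow_three hs h]

theorem pow_three_mul_mul_pow_three_mul (hs : s ^ 3 = 1) (h : s * c ^ 2 * s = c ^ 3) :
    c ^ 3 * s * c ^ 3 * s = s * c * s * c ^ 2 :=
  calc c ^ 3 * s * c ^ 3 * s = s * c ^ 4 * s * s := by rw [mul_pow_four_mul hs h]
    _ = s * c * (c ^ 3 * s ^ 2) := by rw [pow_two]; group
    _ = s * c * s * c ^ 2 := by rw [pow_three_mul_sq hs h, ← mul_assoc]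

end Relations

section HalfTurn

/-- A lift of a half-turn of the icosahedron which exchanges the two vertices on the axis of the
fivefold rotation `c`. -/
def halfTurn (s c : G) : G := s * c * s * c ^ 3 * s

theorem halfTurn_sq (hs : s ^ 3 = 1) (h : s * c ^ 2 * s = c ^ 3) :
    halfTurn s c ^ 2 = c ^ 5 :=
  calc halfTurn s c ^ 2 = s * c * s * (c ^ 3 * s ^ 2) * c * s * c ^ 3 * s := by
        simp only [halfTurn, pow_two]; group
    _ = s * c * s * (s * c ^ 2) * c * s * c ^ 3 * s := by rw [pow_three_mul_sq hs h]
    _ = s * c * s ^ 2 * (c ^ 3 * s * c ^ 3 * s) := by rw [pow_two s]; group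
    _ = s * c * s ^ 2 * (s * c * s * c ^ 2) := by rw [pow_three_mul_mul_pow_three_mul hs h]
    _ = s * c * s ^ 3 * c * s * c ^ 2 := by group
    _ = s * c ^ 2 * s * c ^ 2 := by rw [hs, mul_one, pow_two c]; group
    _ = c ^ 5 := by rw [h]; group

theorem commute_halfTurn_pow_five (h : s * c ^ 2 * s = c ^ 3) : Commute (halfTurn s c) (c ^ 5) := by
  have hcs := (commute_pow_five h).symm
  have hcc := Commute.self_pow c 5
  exact (((hcs.mul_left hcc).mul_left hcs).mul_left (hcc.pow_left 3)).mul_left hcs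

theorem semiconjBy_halfTurn_sq (hs : s ^ 3 = 1) (h : s * c ^ 2 * s = c ^ 3) :
    SemiconjBy (halfTurn s c) (c ^ 2) (c ^ 8) := by
  have hz : Commute (s * c ^ 3 * s) (c ^ 5) :=
    have hs' := (commute_pow_five h).symm
    (hs'.mul_left (Commute.pow_pow_self c 3 5)).mul_left hs'
  refine mul_left_cancel (a := c ^ 2) ?_
  calc c ^ 2 * (halfTurn s c * c ^ 2) = c ^ 2 * s * c * s * c ^ 3 * s * c ^ 2 := by
        unfold halfTurn; group
    _ = s * c ^ 3 * s * c ^ 3 * c ^ 3 * s * c ^ 2 := by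
        rw [mul_pow_three_mul_mul_pow_three hs h]
    _ = s * c ^ 3 * s * c ^ 5 * (c * s * c ^ 2) := by group
    _ = c ^ 5 * (s * c ^ 3) * (s * c * s * c ^ 2) := by rw [hz.eq]; group
    _ = c ^ 5 * (s * c ^ 3) * (c ^ 3 * s * c ^ 3 * s) := by
        rw [pow_three_mul_mul_pow_three_mul hs h]
    _ = c ^ 5 * (s * c ^ 5) * (c * s * c ^ 3 * s) := by group
    _ = c ^ 2 * (c ^ 8 * halfTurn s c) := by
        rw [← (commute_pow_five h).eq]; unfold halfTurn; group

theorem pow_thirty_eq_one (hs : s ^ 3 = 1) (h : s * c ^ 2 * s = c ^ 3) : c ^ 30 = 1 := by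
  have h₁ : c ^ 40 * halfTurn s c = halfTurn s c * c ^ 10 := by
    simpa only [← pow_mul] using ((semiconjBy_halfTurn_sq hs h).pow_right 5).eq.symm
  have h₂ : halfTurn s c * c ^ 10 = c ^ 10 * halfTurn s c := by
    simpa only [← pow_mul] using ((commute_halfTurn_pow_five h).pow_right 2).eq
  have h₃ : c ^ 10 * c ^ 30 = c ^ 10 * 1 := by
    rw [← pow_add, mul_one]
    exact mul_right_cancel (h₁.trans h₂)
  exact mul_left_cancel h₃

theorem semiconjBy_halfTurn (hs : s ^ 3 = 1) (h : s * c ^ 2 * s = c ^ 3) :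
    SemiconjBy (halfTurn s c) c (c ^ (-11 : ℤ)) := by
  have h₁ := SemiconjBy.mul_right (commute_halfTurn_pow_five h)
    ((semiconjBy_halfTurn_sq hs h).zpow_right (-2))
  have h₂ : c ^ 5 * (c ^ 2) ^ (-2 : ℤ) = c := by group
  have h₃ : c ^ 5 * (c ^ 8) ^ (-2 : ℤ) = c ^ (-11 : ℤ) := by group
  rwa [h₂, h₃] at h₁

theorem mul_pow_four_mul_halfTurn (hs : s ^ 3 = 1) (h : s * c ^ 2 * s = c ^ 3) :
    s * c ^ 4 * halfTurn s c = c ^ 11 * (s * c * s) :=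
  calc s * c ^ 4 * halfTurn s c = s * c ^ 4 * s * (c * s * c ^ 3 * s) := by unfold halfTurn; group
    _ = c ^ 3 * s * c ^ 3 * (c * s * c ^ 3 * s) := by rw [mul_pow_four_mul hs h]
    _ = c ^ 3 * (s * c ^ 4 * s) * (c ^ 3 * s) := by group
    _ = c ^ 3 * (c ^ 3 * s * c ^ 3) * (c ^ 3 * s) := by rw [mul_pow_four_mul hs h]
    _ = c ^ 6 * (s * c ^ 5) * (c * s) := by group
    _ = c ^ 11 * (s * c * s) := by rw [← (commute_pow_five h).eq]; group

end HalfTurn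

section Cosets

/-- The subgroup generated by the half-turn and `c`, which stabilizes the axis of the fivefold
rotation `c`. -/
def axisStabilizer (s c : G) : Subgroup G :=
  Subgroup.zpowers (halfTurn s c) ⊔ Subgroup.zpowers c

theorem halfTurn_mem_axisStabilizer : halfTurn s c ∈ axisStabilizer s c :=
  Subgroup.mem_sup_left (Subgroup.mem_zpowers _)

theorem rotation_mem_axisStabilizer : c ∈ axisStabilizer s c :=
  Subgroup.mem_sup_right (Subgroup.mem_zpowers _)

theorem zpowers_halfTurn_le_normalizer (hs : s ^ 3 = 1) (h : s * c ^ 2 * s = c ^ 3) :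
    Subgroup.zpowers (halfTurn s c) ≤ Subgroup.normalizer (Subgroup.zpowers c : Set G) := by
  have : Finite (Subgroup.zpowers c) :=
    finite_zpowers.mpr (isOfFinOrder_iff_pow_eq_one.mpr ⟨30, by norm_num, pow_thirty_eq_one hs h⟩)
  refine Subgroup.zpowers_le.mpr (Subgroup.mem_normalizer_fintype ?_)
  rintro _ ⟨n, rfl⟩
  refine ⟨-11 * n, ?_⟩
  simpa only [zpow_mul] using eq_mul_inv_of_mul_eq ((semiconjBy_halfTurn hs h).zpow_right n).eq.symm

theorem exists_eq_halfTurn_pow_mul (hs : s ^ 3 = 1) (h : s * c ^ 2 * s = c ^ 3) {d : G}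
    (hd : d ∈ axisStabilizer s c) : ∃ j : Fin 2, ∃ n : ℤ, d = halfTurn s c ^ (j : ℕ) * c ^ n := by
  rw [← SetLike.mem_coe, axisStabilizer, Subgroup.coe_mul_of_left_le_normalizer_right _ _
    (zpowers_halfTurn_le_normalizer hs h)] at hd
  obtain ⟨_, ⟨m, rfl⟩, _, ⟨n, rfl⟩, rfl⟩ := hd
  obtain ⟨j, q, rfl⟩ := exists_eq_fin_add_mul 2 m
  refine ⟨j, 5 * q + n, ?_⟩
  simp only [zpow_add, zpow_mul, zpow_natCast, zpow_ofNat, halfTurn_sq hs h, mul_assoc]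

/-- The union of the cosets of the axis stabilizer that correspond to the axis of `c` and to its
images under `c ^ k * s`. Only `k` modulo `5` matters. -/
def axisCosets (s c : G) : Set G :=
  {g | g ∈ axisStabilizer s c ∨ ∃ k : ℤ, ∃ d ∈ axisStabilizer s c, g = c ^ k * s * d}

theorem axisCosets_mul_mem {g d : G} (hg : g ∈ axisCosets s c) (hd : d ∈ axisStabilizer s c) :
    g * d ∈ axisCosets s c := by
  rcases hg with hg | ⟨k, e, he, rfl⟩
  · exact Or.inl (mul_mem hg hd)
  · exact Or.inr ⟨k, e * d, mul_mem he hd, mul_assoc _ _ _⟩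

theorem zpow_mul_mem_axisCosets {g : G} (hg : g ∈ axisCosets s c) (n : ℤ) :
    c ^ n * g ∈ axisCosets s c := by
  rcases hg with hg | ⟨k, d, hd, rfl⟩
  · exact Or.inl (mul_mem (zpow_mem rotation_mem_axisStabilizer n) hg)
  · exact Or.inr ⟨n + k, d, hd, by simp only [zpow_add, mul_assoc]⟩

theorem mul_self_mem_axisCosets (hs : s ^ 3 = 1) (h : s * c ^ 2 * s = c ^ 3) :
    s * s ∈ axisCosets s c := by
  refine Or.inr ⟨2, c ^ (-3 : ℤ), zpow_mem rotation_mem_axisStabilizer _, ?_⟩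
  rw [← pow_two, eq_mul_inv_of_mul_eq (sq_mul_pow_three hs h)]
  group

theorem mul_mul_mem_axisCosets (hs : s ^ 3 = 1) (h : s * c ^ 2 * s = c ^ 3) :
    s * c * s ∈ axisCosets s c := by
  refine Or.inr ⟨-11, c ^ 4 * halfTurn s c, mul_mem (pow_mem rotation_mem_axisStabilizer 4)
    halfTurn_mem_axisStabilizer, ?_⟩
  calc s * c * s = c ^ (-11 : ℤ) * (c ^ 11 * (s * c * s)) := by group
    _ = c ^ (-11 : ℤ) * (s * c ^ 4 * halfTurn s c) := by rw [mul_pow_four_mul_halfTurn hs h]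
    _ = c ^ (-11 : ℤ) * s * (c ^ 4 * halfTurn s c) := by simp only [mul_assoc]

theorem mul_pow_mul_mem_axisCosets (hs : s ^ 3 = 1) (h : s * c ^ 2 * s = c ^ 3) (r : Fin 5) :
    s * c ^ (r : ℕ) * s ∈ axisCosets s c := by
  have hc : c ^ 3 ∈ axisStabilizer s c := pow_mem rotation_mem_axisStabilizer 3
  fin_cases r
  · simpa using mul_self_mem_axisCosets hs h
  · simpa using mul_mul_mem_axisCosets hs h
  · exact Or.inl (h ▸ hc)
  · have hmem := zpow_mul_mem_axisCosets (mul_mul_mem_axisCosets hs h) 2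
    convert! axisCosets_mul_mem hmem (inv_mem hc) using 1
    rw [eq_mul_inv_of_mul_eq (mul_pow_three_mul_mul_pow_three hs h)]
    group
  · exact Or.inr ⟨3, c ^ 3, hc, by rw [zpow_ofNat]; exact mul_pow_four_mul hs h⟩

theorem mul_zpow_mul_mem_axisCosets (hs : s ^ 3 = 1) (h : s * c ^ 2 * s = c ^ 3) (k : ℤ) :
    s * c ^ k * s ∈ axisCosets s c := by
  obtain ⟨r, q, rfl⟩ := exists_eq_fin_add_mul 5 k
  have hcomm : Commute ((c ^ 5) ^ q) s := (commute_pow_five h).zpow_left q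
  have hsplit : s * c ^ (r + 5 * q : ℤ) * s = s * c ^ (r : ℕ) * s * (c ^ 5) ^ q := by
    rw [mul_assoc _ s, ← hcomm.eq]
    group
  rw [Nat.cast_ofNat, hsplit]
  exact axisCosets_mul_mem (mul_pow_mul_mem_axisCosets hs h r)
    (zpow_mem (pow_mem rotation_mem_axisStabilizer 5) q)

theorem mul_mem_axisCosets (hs : s ^ 3 = 1) (h : s * c ^ 2 * s = c ^ 3) {g : G}
    (hg : g ∈ axisCosets s c) : s * g ∈ axisCosets s c := by
  rcases hg with hg | ⟨k, d, hd, rfl⟩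
  · exact Or.inr ⟨0, g, hg, by rw [zpow_zero, one_mul]⟩
  · simpa only [mul_assoc] using axisCosets_mul_mem (mul_zpow_mul_mem_axisCosets hs h k) hd

theorem axisCosets_eq_univ (hs : s ^ 3 = 1) (h : s * c ^ 2 * s = c ^ 3)
    (hgen : Subgroup.closure {s, c} = ⊤) : axisCosets s c = Set.univ := by
  have hs_inv : s⁻¹ = s * s := by rw [inv_eq_iff_mul_eq_one, ← hs, pow_three]
  refine Set.eq_univ_of_forall fun g ↦ ?_
  have hg : g ∈ Subgroup.closure {s, c} := hgen ▸ Subgroup.mem_top g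
  induction hg using Subgroup.closure_induction_left with
  | one => exact Or.inl (one_mem _)
  | mul_left x hx y _ ih =>
    rcases hx with rfl | rfl
    · exact mul_mem_axisCosets hs h ih
    · simpa only [zpow_one] using zpow_mul_mem_axisCosets ih 1
  | inv_mul_cancel x hx y _ ih =>
    rcases hx with rfl | rfl
    · rw [hs_inv, mul_assoc]
      exact mul_mem_axisCosets hs h (mul_mem_axisCosets hs h ih)
    · simpa only [zpow_neg_one] using zpow_mul_mem_axisCosets ih (-1)

/-- Representatives of the cosets of `⟨c⟩`, one for each of the twelve vertices of the icosahedron: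
`none` stands for the axis of `c` and `some k` for its image under `c ^ k * s`, while the second
component selects one of the two vertices on that axis. -/
def vertexRep (s c : G) : Option (Fin 5) × Fin 2 → G
  | (none, j) => halfTurn s c ^ (j : ℕ)
  | (some k, j) => c ^ (k : ℕ) * s * halfTurn s c ^ (j : ℕ)

theorem map_vertexRep {H : Type*} [Group H] (f : G →* H) (x : Option (Fin 5) × Fin 2) :
    f (vertexRep s c x) = vertexRep (f s) (f c) x := by
  rcases x with ⟨_ | k, j⟩ <;> simp only [vertexRep, halfTurn, map_mul, map_pow]

theorem vertexRep_surjective (hs : s ^ 3 = 1) (h : s * c ^ 2 * s = c ^ 3)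
    (hgen : Subgroup.closure {s, c} = ⊤) :
    Function.Surjective fun x ↦ ((vertexRep s c x : G) : G ⧸ Subgroup.zpowers c) := by
  refine fun y ↦ QuotientGroup.induction_on y fun g ↦ ?_
  rcases (axisCosets_eq_univ hs h hgen).symm ▸ Set.mem_univ g with hg | ⟨k, d, hd, rfl⟩
  · obtain ⟨j, n, rfl⟩ := exists_eq_halfTurn_pow_mul hs h hg
    exact ⟨(none, j), (QuotientGroup.mk_mul_of_mem _ (Subgroup.zpow_mem_zpowers c n)).symm⟩
  · obtain ⟨r, q, rfl⟩ := exists_eq_fin_add_mul 5 k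
    have hcomm : Commute ((c ^ 5) ^ q) s := (commute_pow_five h).zpow_left q
    obtain ⟨j, n, hjn⟩ := exists_eq_halfTurn_pow_mul hs h
      (mul_mem (zpow_mem (pow_mem rotation_mem_axisStabilizer 5) q) hd)
    have hsplit : c ^ (r + 5 * q : ℤ) * s * d = vertexRep s c (some r, j) * c ^ n :=
      calc c ^ (r + 5 * q : ℤ) * s * d = c ^ (r : ℕ) * ((c ^ 5) ^ q * s) * d := by group
        _ = c ^ (r : ℕ) * s * ((c ^ 5) ^ q * d) := by rw [hcomm.eq]; group
        _ = vertexRep s c (some r, j) * c ^ n := by rw [hjn, vertexRep]; group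
    refine ⟨(some r, j), ?_⟩
    rw [Nat.cast_ofNat, hsplit]
    exact (QuotientGroup.mk_mul_of_mem _ (Subgroup.zpow_mem_zpowers c n)).symm

end Cosets

section Presentation

theorem gs_pow_three : gs ^ 3 = 1 :=
  PresentedGroup.one_of_mem (Or.inr (Or.inl rfl))

theorem braid_relation : gs * gt * gs * gt * gs = gt * gs * gt * gs * gt :=
  PresentedGroup.mk_eq_mk_of_mul_inv_mem (Or.inl rfl)

theorem gs_mul_sq_mul_gs : gs * (gs * gt) ^ 2 * gs = (gs * gt) ^ 3 :=
  calc gs * (gs * gt) ^ 2 * gs = gs * (gs * gt * gs * gt * gs) := by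
        simp only [pow_two, mul_assoc]
    _ = (gs * gt) ^ 3 := by rw [braid_relation]; simp only [pow_three, mul_assoc]

theorem closure_gs_gs_mul_gt : Subgroup.closure {gs, gs * gt} = ⊤ := by
  rw [← top_le_iff, ← PresentedGroup.closure_range_of, Subgroup.closure_le]
  have hs : gs ∈ Subgroup.closure {gs, gs * gt} := Subgroup.subset_closure (Or.inl rfl)
  have hst : gs * gt ∈ Subgroup.closure {gs, gs * gt} := Subgroup.subset_closure (Or.inr rfl)
  rintro _ ⟨_ | _, rfl⟩
  · exact (Subgroup.mul_mem_cancel_left _ hs).mp hst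
  · exact hs

end Presentation

section Representation

/-- The group `SL₂(𝔽₅) × ℤ/3`, of order 360, in which the elements of `G₂₀` are told apart. -/
abbrev Model : Type := Matrix.SpecialLinearGroup (Fin 2) (ZMod 5) × Multiplicative (ZMod 3)

/-- The images in `SL₂(𝔽₅) × ℤ/3` of the generators, with `true ↦ s` and `false ↦ t`. The matrices
have order three and are chosen so that `s * t` is minus an upper unitriangular matrix. -/
def modelGen : Bool → Model
  | true => (⟨!![0, 1; -1, -1], by decide⟩, Multiplicative.ofAdd 1)
  | false => (⟨!![1, 3; -1, -2], by decide⟩, Multiplicative.ofAdd 1)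

theorem lift_modelGen_eq_one : ∀ r ∈ relG20, FreeGroup.lift modelGen r = 1 := by
  rintro _ (rfl | rfl | rfl) <;>
    simp only [map_mul, map_inv, map_pow, FreeGroup.lift_apply_of] <;> decide

/-- The representation of `G₂₀` on `𝔽₅²`, paired with its abelianization onto `ℤ/3`. -/
def toModel : G20 →* Model := PresentedGroup.toGroup lift_modelGen_eq_one

theorem toModel_gs : toModel gs = modelGen true := PresentedGroup.toGroup.of _

theorem toModel_gs_mul_gt : toModel (gs * gt) = modelGen true * modelGen false := by
  rw [map_mul, toModel_gs]
  exact congrArg _ (PresentedGroup.toGroup.of _)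

theorem orderOf_toModel_gs_mul_gt : orderOf (toModel (gs * gt)) = 30 := by
  rw [toModel_gs_mul_gt, orderOf_eq_iff (by norm_num)]
  decide +kernel

theorem conj_toModel_vertexRep_injective : Function.Injective fun x ↦
    toModel (vertexRep gs (gs * gt) x) * toModel (gs * gt) *
      (toModel (vertexRep gs (gs * gt) x))⁻¹ := by
  simp only [map_vertexRep, toModel_gs, toModel_gs_mul_gt]
  decide +kernel

end Representation

theorem orderOf_gs_mul_gt : orderOf (gs * gt) = 30 :=
  Nat.dvd_antisymm (orderOf_dvd_of_pow_eq_one (pow_thirty_eq_one gs_pow_three gs_mul_sq_mul_gs))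
    (orderOf_toModel_gs_mul_gt ▸ orderOf_map_dvd toModel (gs * gt))

theorem mk_vertexRep_bijective : Function.Bijective fun x ↦
    ((vertexRep gs (gs * gt) x : G20) : G20 ⧸ Subgroup.zpowers (gs * gt)) := by
  refine ⟨mk_injective_of_conj_injective fun x y hxy ↦ conj_toModel_vertexRep_injective ?_,
    vertexRep_surjective gs_pow_three gs_mul_sq_mul_gs closure_gs_gs_mul_gt⟩
  simpa only [map_mul, map_inv] using congrArg toModel hxy

theorem card_quotient_zpowers_gs_mul_gt : Nat.card (G20 ⧸ Subgroup.zpowers (gs * gt)) = 12 := by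
  rw [← Nat.card_eq_of_bijective _ mk_vertexRep_bijective]
  simp

end G20

/-- The group `⟨s, t | s t s t s = t s t s t, s³ = t³ = 1⟩` (i.e. `G₂₀`)
is a finite group of order 360. -/
theorem stmt6 : Finite G20 ∧ Nat.card G20 = 360 := by
  have hcard : Nat.card G20 = 360 := by
    rw [(Subgroup.zpowers (gs * gt)).card_eq_card_quotient_mul_card_subgroup,
      G20.card_quotient_zpowers_gs_mul_gt, Nat.card_zpowers, G20.orderOf_gs_mul_gt]
  exact ⟨Nat.finite_of_card_ne_zero (by rw [hcard]; norm_num), hcard⟩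
end

section
/- The group ⟨u, v | (u v)^5 = (v u)^5, u^2 = 1, v^3 = 1⟩ is a finite group of order 720. -/
/-- Relators of the complex reflection group
`G₂₁ = ⟨u, v | (u v)^5 = (v u)^5, u² = 1, v³ = 1⟩`, with `true ↦ u`, `false ↦ v`. -/
def relG21 : Set (FreeGroup Bool) :=
  {(FreeGroup.of true * FreeGroup.of false) ^ 5 *
     ((FreeGroup.of false * FreeGroup.of true) ^ 5)⁻¹,
   FreeGroup.of true ^ 2, FreeGroup.of false ^ 3}

/-- The group `G₂₁`. -/
abbrev G21 := PresentedGroup relG21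

/-
The element `z = (u v)^5` of `G₂₁` is central, and the quotient by `⟨z⟩` is a quotient of the
`(2, 5, 3)` triangle group, the rotation group of the icosahedron. Letting it act on the twelve
vertices bounds its order by `60`; as it maps onto the simple group `A₅`, the order is exactly `60`.
So the centre has index dividing `60`, and the transfer into the centre shows that `g ↦ g ^ 60` is
a homomorphism. It kills `u` and `v`, hence `z ^ 12 = (u v)^60 = 1`. That `z` has order exactly `12`
is seen in a two-dimensional reflection representation, and `60 * 12 = 720`.
-/

section GroupTheory

open scoped Pointwise

variable {G : Type*} [Group G]

lemma smul_invariant_eq_univ {X : Type*} [MulAction G X] [MulAction.IsPretransitive G X]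
    {S : Set G} (hS : Subgroup.closure S = ⊤) {A : Set X} (hfin : A.Finite) (hne : A.Nonempty)
    (hA : ∀ g ∈ S, ∀ x ∈ A, g • x ∈ A) : A = Set.univ := by
  have hstab : MulAction.stabilizer G A = ⊤ := by
    rw [eq_top_iff, ← hS, Subgroup.closure_le]
    exact fun g hg ↦ (MulAction.mem_stabilizer_set' hfin).2 fun x hx ↦ hA g hg x hx
  obtain ⟨a, ha⟩ := hne
  refine Set.eq_univ_of_forall fun x ↦ ?_
  obtain ⟨g, rfl⟩ := MulAction.exists_smul_eq G a x
  exact (MulAction.mem_stabilizer_set.1 (hstab ▸ Subgroup.mem_top g) a).2 ha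

lemma closure_pair_mul_right (u v : G) :
    Subgroup.closure {u, u * v} = Subgroup.closure {u, v} := by
  have mem_left (a b : G) : a ∈ Subgroup.closure {a, b} := Subgroup.subset_closure (by simp)
  have mem_right (a b : G) : b ∈ Subgroup.closure {a, b} := Subgroup.subset_closure (by simp)
  refine le_antisymm ((Subgroup.closure_le _).2 ?_) ((Subgroup.closure_le _).2 ?_)
  · exact Set.pair_subset (mem_left u v) (mul_mem (mem_left u v) (mem_right u v))
  · refine Set.pair_subset (mem_left u _) ?_
    simpa using mul_mem (inv_mem (mem_left u (u * v))) (mem_right u (u * v))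

lemma mul_pow_mem_center {u v : G} {n : ℕ} (hgen : Subgroup.closure {u, v} = ⊤)
    (huv : (u * v) ^ n = (v * u) ^ n) : (u * v) ^ n ∈ Subgroup.center G := by
  have hu : Commute u ((u * v) ^ n) := by
    have : SemiconjBy u (v * u) (u * v) := (mul_assoc u v u).symm
    exact huv ▸ this.pow_right n
  have huv' : Commute (u * v) ((u * v) ^ n) := Commute.self_pow _ n
  rw [← closure_pair_mul_right] at hgen
  rw [Subgroup.center_eq_iInf hgen]
  simpa only [Subgroup.mem_iInf, Set.mem_insert_iff, Set.mem_singleton_iff, forall_eq_or_imp,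
    forall_eq, Subgroup.mem_centralizer_singleton_iff] using ⟨hu.eq.symm, huv'.eq.symm⟩

lemma zpowers_normal_of_mem_center {z : G} (hz : z ∈ Subgroup.center G) :
    (Subgroup.zpowers z).Normal where
  conj_mem n hn g := by
    have hn' : n ∈ Subgroup.center G := Subgroup.zpowers_le.2 hz hn
    rwa [Subgroup.mem_center_iff.1 hn' g, mul_inv_cancel_right]

lemma mul_pow_of_index_center_dvd {n : ℕ} (hn : (Subgroup.center G).index ∣ n) (g h : G) :
    (g * h) ^ n = g ^ n * h ^ n := by
  obtain ⟨m, rfl⟩ := hn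
  by_cases hfin : (Subgroup.center G).index = 0
  · simp [hfin]
  have : (Subgroup.center G).FiniteIndex := ⟨hfin⟩
  have hmul : (g * h) ^ (Subgroup.center G).index
      = g ^ (Subgroup.center G).index * h ^ (Subgroup.center G).index :=
    congrArg Subtype.val (map_mul (MonoidHom.transferCenterPow G) g h)
  have hcomm : Commute (g ^ (Subgroup.center G).index) (h ^ (Subgroup.center G).index) :=
    Subgroup.mem_center_iff.1 ((Subgroup.center G).pow_index_mem h) _
  rw [pow_mul, hmul, hcomm.mul_pow, ← pow_mul, ← pow_mul]

end GroupTheory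

/-- The relations of the `(2, 5, 3)` triangle group, whose order-`5` generator `t` rotates an
icosahedron about a vertex and whose involution `u` is a half-turn about an edge at that vertex. -/
structure IsIcosahedralPair {G : Type*} [Group G] (u t : G) : Prop where
  sq_left : u ^ 2 = 1
  pow_five_right : t ^ 5 = 1
  mul_pow_three : (u * t) ^ 3 = 1

/-- The orbit of `q` under an element `t` with `t ^ 5 = 1`. The exponents `-2, …, 2` make the
list symmetric under `t ↔ t⁻¹`. -/
def pentagon {G X : Type*} [Group G] [MulAction G X] (t : G) (q : X) : Set X :=
  {q, t • q, t • t • q, t⁻¹ • q, t⁻¹ • t⁻¹ • q}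

/-- The vertex of an icosahedron antipodal to `p`, for `u` and `t` as in `IsIcosahedralPair` and `t`
fixing `p`. -/
def oppositePole {G X : Type*} [Group G] [MulAction G X] (u t : G) (p : X) : X :=
  u • t⁻¹ • t⁻¹ • u • t • t • u • p

/-- The vertices of an icosahedron, where `t` is the rotation by a fifth of a turn about the axis
through the vertex `p`: the pole `p`, its opposite pole, and the pentagon around each of them. -/
def icosahedronVertices {G X : Type*} [Group G] [MulAction G X] (u t : G) (p : X) : Set X :=
  {p, oppositePole u t p} ∪ (pentagon t (u • p) ∪ pentagon t (u • t • t • u • p))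

lemma ncard_pentagon_le {G X : Type*} [Group G] [MulAction G X] (t : G) (q : X) :
    (pentagon t q).ncard ≤ 5 := by
  classical
  simpa [pentagon, ← Set.ncard_coe_finset] using
    Finset.card_le_five (a := q) (b := t • q) (c := t • t • q) (d := t⁻¹ • q) (e := t⁻¹ • t⁻¹ • q)

section Icosahedron

variable {G X : Type*} [Group G] [MulAction G X] (u t : G) (p : X)

lemma icosahedronVertices_finite : (icosahedronVertices u t p).Finite := by
  simp [icosahedronVertices, pentagon]

lemma ncard_icosahedronVertices_le : (icosahedronVertices u t p).ncard ≤ 12 := by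
  have hpoles : ({p, oppositePole u t p} : Set X).ncard ≤ 2 :=
    (Set.ncard_insert_le _ _).trans (by rw [Set.ncard_singleton])
  have hnear := ncard_pentagon_le t (u • p)
  have hfar := ncard_pentagon_le t (u • t • t • u • p)
  have hrings := Set.ncard_union_le (pentagon t (u • p)) (pentagon t (u • t • t • u • p))
  exact (Set.ncard_union_le _ _).trans (by omega)

end Icosahedron

namespace IsIcosahedralPair

variable {G : Type*} [Group G] {u t : G} (h : IsIcosahedralPair u t)
include h

lemma left_mul_self : u * u = 1 := by rw [← sq, h.sq_left]

lemma right_pow_three : t * t * t = t⁻¹ * t⁻¹ := by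
  have : t * t * t * (t * t) = 1 := by
    rw [← h.pow_five_right]
    simp only [pow_succ, pow_zero, one_mul, mul_assoc]
  rw [eq_inv_of_mul_eq_one_left this, mul_inv_rev]

lemma mul_mul_left : u * t * u = t⁻¹ * u * t⁻¹ := by
  have : u * t * u * (t * u * t) = 1 := by
    rw [← h.mul_pow_three]
    simp only [pow_succ, pow_zero, one_mul, mul_assoc]
  rw [eq_inv_of_mul_eq_one_left this, mul_inv_rev, mul_inv_rev,
    inv_eq_of_mul_eq_one_left h.left_mul_self, mul_assoc]

lemma mul_inv_mul_left : u * t⁻¹ * u = t * u * t := by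
  have := congrArg (·⁻¹) h.mul_mul_left
  simpa only [mul_inv_rev, inv_inv, inv_eq_of_mul_eq_one_left h.left_mul_self, mul_assoc] using this

section Action

variable {X : Type*} [MulAction G X]

lemma left_smul_smul (x : X) : u • u • x = x := by
  rw [smul_smul, h.left_mul_self, one_smul]

lemma right_smul_smul_smul (x : X) : t • t • t • x = t⁻¹ • t⁻¹ • x := by
  simp only [smul_smul, h.right_pow_three, ← mul_assoc]

lemma smul_smul_left_smul (x : X) : u • t • u • x = t⁻¹ • u • t⁻¹ • x := by
  simp only [smul_smul, h.mul_mul_left, ← mul_assoc]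

lemma smul_inv_smul_left_smul (x : X) : u • t⁻¹ • u • x = t • u • t • x := by
  simp only [smul_smul, h.mul_inv_mul_left, ← mul_assoc]

lemma right_smul_mem_pentagon {q x : X} (hx : x ∈ pentagon t q) : t • x ∈ pentagon t q := by
  rcases hx with rfl | rfl | rfl | rfl | rfl
  all_goals simp only [pentagon, h.right_smul_smul_smul, smul_inv_smul, Set.mem_insert_iff,
    Set.mem_singleton_iff, true_or, or_true]

lemma left_smul_inv_smul_inv_smul (x : X) :
    u • t⁻¹ • t⁻¹ • u • x = t • u • t • t • u • t • x := by
  rw [← h.left_smul_smul (t⁻¹ • u • x), h.smul_inv_smul_left_smul, h.smul_inv_smul_left_smul]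

section FixedPoint

variable {p : X} (hp : t • p = p)
include hp

lemma left_smul_mem_of_mem_near_pentagon {x : X} (hx : x ∈ pentagon t (u • p)) :
    u • x ∈ icosahedronVertices u t p := by
  have hp' : t⁻¹ • p = p := inv_smul_eq_iff.2 hp.symm
  rcases hx with rfl | rfl | rfl | rfl | rfl
  all_goals
    simp only [icosahedronVertices, pentagon, h.left_smul_smul, h.smul_smul_left_smul,
      h.smul_inv_smul_left_smul, h.left_smul_inv_smul_inv_smul, hp, hp', Set.mem_union,
      Set.mem_insert_iff, Set.mem_singleton_iff, true_or, or_true]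

lemma left_smul_inv_smul_far :
    u • t⁻¹ • u • t • t • u • p = t • t • u • t • t • u • p := by
  rw [h.smul_inv_smul_left_smul, h.right_smul_smul_smul, h.left_smul_inv_smul_inv_smul, hp]

lemma left_smul_mem_of_mem_far_pentagon {x : X} (hx : x ∈ pentagon t (u • t • t • u • p)) :
    u • x ∈ icosahedronVertices u t p := by
  have hp' : t⁻¹ • p = p := inv_smul_eq_iff.2 hp.symm
  rcases hx with rfl | rfl | rfl | rfl | rfl
  · simp [icosahedronVertices, pentagon, h.left_smul_smul]
  · simp [icosahedronVertices, pentagon, h.smul_smul_left_smul, hp']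
  · rw [← h.left_smul_inv_smul_far hp, h.left_smul_smul]
    simp [icosahedronVertices, pentagon]
  · rw [h.left_smul_inv_smul_far hp]
    simp [icosahedronVertices, pentagon]
  · simp [icosahedronVertices, oppositePole]

lemma right_smul_oppositePole : t • oppositePole u t p = oppositePole u t p := by
  refine (inv_smul_eq_iff.1 ?_).symm
  rw [oppositePole, ← h.smul_smul_left_smul, h.left_smul_inv_smul_far hp, h.right_smul_smul_smul]

lemma left_smul_mem_icosahedronVertices {x : X} (hx : x ∈ icosahedronVertices u t p) :
    u • x ∈ icosahedronVertices u t p := by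
  rcases hx with (rfl | rfl) | hx | hx
  · simp [icosahedronVertices, pentagon]
  · rw [oppositePole, h.left_smul_smul]
    simp [icosahedronVertices, pentagon]
  · exact h.left_smul_mem_of_mem_near_pentagon hp hx
  · exact h.left_smul_mem_of_mem_far_pentagon hp hx

lemma right_smul_mem_icosahedronVertices {x : X} (hx : x ∈ icosahedronVertices u t p) :
    t • x ∈ icosahedronVertices u t p := by
  rcases hx with (rfl | rfl) | hx | hx
  · simp [icosahedronVertices, hp]
  · rw [h.right_smul_oppositePole hp]
    simp [icosahedronVertices]
  · exact Or.inr (Or.inl (h.right_smul_mem_pentagon hx))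
  · exact Or.inr (Or.inr (h.right_smul_mem_pentagon hx))

lemma icosahedronVertices_eq_univ [MulAction.IsPretransitive G X]
    (hgen : Subgroup.closure {u, t} = ⊤) : icosahedronVertices u t p = Set.univ := by
  have hne : (icosahedronVertices u t p).Nonempty := ⟨p, by simp [icosahedronVertices]⟩
  refine smul_invariant_eq_univ hgen (icosahedronVertices_finite u t p) hne ?_
  rintro g (rfl | rfl) x hx
  · exact h.left_smul_mem_icosahedronVertices hp hx
  · exact h.right_smul_mem_icosahedronVertices hp hx

end FixedPoint

end Action

lemma index_zpowers_right_mem_Icc (hgen : Subgroup.closure {u, t} = ⊤) :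
    (Subgroup.zpowers t).index ∈ Set.Icc 1 12 := by
  set p : G ⧸ Subgroup.zpowers t := QuotientGroup.mk 1
  have hp : t • p = p := by
    rw [MulAction.Quotient.smul_mk, smul_eq_mul, mul_one, QuotientGroup.eq, mul_one]
    exact inv_mem (Subgroup.mem_zpowers t)
  have huniv := h.icosahedronVertices_eq_univ hp hgen
  have hfin : Finite (G ⧸ Subgroup.zpowers t) :=
    Set.finite_univ_iff.1 (huniv ▸ icosahedronVertices_finite u t p)
  refine ⟨Nat.card_pos, ?_⟩
  rw [Subgroup.index, ← Set.ncard_univ, ← huniv]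
  exact ncard_icosahedronVertices_le u t p

theorem natCard_mem_Icc (hgen : Subgroup.closure {u, t} = ⊤) : Nat.card G ∈ Set.Icc 1 60 := by
  obtain ⟨hpos, hle⟩ := h.index_zpowers_right_mem_Icc hgen
  have ht : orderOf t ∣ 5 := orderOf_dvd_of_pow_eq_one h.pow_five_right
  rw [← Subgroup.card_mul_index (Subgroup.zpowers t), Nat.card_zpowers]
  exact ⟨Nat.mul_pos (Nat.pos_of_dvd_of_pos ht (by norm_num)) hpos,
    Nat.mul_le_mul (Nat.le_of_dvd (by norm_num) ht) hle⟩

end IsIcosahedralPair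

section AlternatingGroup

lemma natCard_alternatingGroup_five : Nat.card (alternatingGroup (Fin 5)) = 60 := by
  rw [nat_card_alternatingGroup, Nat.card_fin]
  norm_num [Nat.factorial]

lemma alternatingGroup_five_eq_top {H : Subgroup (alternatingGroup (Fin 5))}
    (hH : 30 ∣ Nat.card H) : H = ⊤ := by
  have hcard := natCard_alternatingGroup_five ▸ H.card_mul_index
  obtain ⟨m, hm⟩ := hH
  have hdvd : H.index ∣ 2 := ⟨m, by rw [hm] at hcard; linarith⟩
  rcases (Nat.dvd_prime Nat.prime_two).1 hdvd with hone | htwo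
  · exact Subgroup.index_eq_one.1 hone
  · refine (Subgroup.normal_of_index_eq_two htwo).eq_bot_or_eq_top.resolve_left ?_
    rintro rfl
    rw [Subgroup.index_bot, natCard_alternatingGroup_five] at htwo
    norm_num at htwo

/-- The image of `u` in the rotation group `A₅` of the icosahedron. -/
def alternatingU : alternatingGroup (Fin 5) :=
  ⟨Equiv.swap 0 1 * Equiv.swap 2 3, by simp [Equiv.Perm.mem_alternatingGroup]⟩

/-- The image of `v` in the rotation group `A₅` of the icosahedron. -/
def alternatingV : alternatingGroup (Fin 5) :=
  ⟨Equiv.swap 1 2 * Equiv.swap 2 4, by simp [Equiv.Perm.mem_alternatingGroup]⟩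

lemma orderOf_alternatingU : orderOf alternatingU = 2 :=
  orderOf_eq_prime (by decide +kernel) (by decide +kernel)

lemma orderOf_alternatingV : orderOf alternatingV = 3 :=
  orderOf_eq_prime (by decide +kernel) (by decide +kernel)

lemma orderOf_alternatingU_mul_alternatingV : orderOf (alternatingU * alternatingV) = 5 :=
  have : Fact (Nat.Prime 5) := ⟨Nat.prime_five⟩
  orderOf_eq_prime (by decide +kernel) (by decide +kernel)

lemma closure_alternatingU_alternatingV :
    Subgroup.closure {alternatingU, alternatingV} = ⊤ := by
  have hU : alternatingU ∈ Subgroup.closure {alternatingU, alternatingV} :=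
    Subgroup.subset_closure (by simp)
  have hV : alternatingV ∈ Subgroup.closure {alternatingU, alternatingV} :=
    Subgroup.subset_closure (by simp)
  have h2 := orderOf_alternatingU ▸ Subgroup.orderOf_dvd_natCard _ hU
  have h3 := orderOf_alternatingV ▸ Subgroup.orderOf_dvd_natCard _ hV
  have h5 := orderOf_alternatingU_mul_alternatingV ▸
    Subgroup.orderOf_dvd_natCard _ (mul_mem hU hV)
  exact alternatingGroup_five_eq_top (by omega)

end AlternatingGroup

section ReflectionRepresentation

lemma orderOf_scalar {n R : Type*} [DecidableEq n] [Fintype n] [Nonempty n] [Semiring R] (r : R) :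
    orderOf (Matrix.scalar n r) = orderOf r := by
  refine orderOf_eq_orderOf_iff.2 fun k ↦ ?_
  rw [← map_pow, ← map_one (Matrix.scalar n), Matrix.scalar_inj]

/- The reflection representation is defined over `ℚ(ζ₆₀)`; it is reduced here modulo a prime above
`61 = 60 + 1`. In a basis of roots `u` and `v` are reflections with nontrivial eigenvalues `-1` and
`13`, a cube root of unity, and the entry `15` makes `(u v)^5` the scalar `21`, of order `12`. -/

/-- The image of `u` in the reflection representation of `G₂₁` over `𝔽₆₁`. -/
def reflectionU : (Matrix (Fin 2) (Fin 2) (ZMod 61))ˣ :=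
  Units.ofPowEqOne !![-1, 15; 0, 1] 2 (by decide +kernel) two_ne_zero

/-- The image of `v` in the reflection representation of `G₂₁` over `𝔽₆₁`. -/
def reflectionV : (Matrix (Fin 2) (Fin 2) (ZMod 61))ˣ :=
  Units.ofPowEqOne !![1, 0; 1, 13] 3 (by decide +kernel) three_ne_zero

lemma reflectionU_mul_reflectionV_pow_five :
    (((reflectionU * reflectionV) ^ 5 : (Matrix (Fin 2) (Fin 2) (ZMod 61))ˣ) :
      Matrix (Fin 2) (Fin 2) (ZMod 61)) = Matrix.scalar (Fin 2) 21 := by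
  decide +kernel

lemma orderOf_reflectionU_mul_reflectionV_pow_five :
    orderOf ((reflectionU * reflectionV) ^ 5) = 12 := by
  rw [← orderOf_units, reflectionU_mul_reflectionV_pow_five, orderOf_scalar,
    orderOf_eq_iff (by norm_num)]
  decide +kernel

end ReflectionRepresentation

namespace G21

/-- The generator `u` of `G₂₁`. -/
def u : G21 := PresentedGroup.of true

/-- The generator `v` of `G₂₁`. -/
def v : G21 := PresentedGroup.of false

lemma u_sq : u ^ 2 = 1 :=
  PresentedGroup.one_of_mem (rels := relG21) (x := FreeGroup.of true ^ 2) (by simp [relG21])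

lemma v_pow_three : v ^ 3 = 1 :=
  PresentedGroup.one_of_mem (rels := relG21) (x := FreeGroup.of false ^ 3) (by simp [relG21])

lemma u_mul_v_pow_five : (u * v) ^ 5 = (v * u) ^ 5 :=
  mul_inv_eq_one.1 (PresentedGroup.one_of_mem (rels := relG21)
    (x := (FreeGroup.of true * FreeGroup.of false) ^ 5 *
      ((FreeGroup.of false * FreeGroup.of true) ^ 5)⁻¹) (by simp [relG21]))

lemma closure_u_v : Subgroup.closure {u, v} = ⊤ := by
  rw [← PresentedGroup.closure_range_of relG21, Bool.range_eq, Set.pair_comm, u, v]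

lemma exists_hom {H : Type*} [Group H] {a b : H} (ha : a ^ 2 = 1) (hb : b ^ 3 = 1)
    (hab : (a * b) ^ 5 = (b * a) ^ 5) : ∃ f : G21 →* H, f u = a ∧ f v = b := by
  have hrel : ∀ r ∈ relG21, FreeGroup.lift (fun i : Bool ↦ if i then a else b) r = 1 := by
    rintro r (rfl | rfl | rfl) <;> simp [ha, hb, hab]
  exact ⟨PresentedGroup.toGroup hrel, by simp [u], by simp [v]⟩

lemma u_mul_v_pow_five_mem_center : (u * v) ^ 5 ∈ Subgroup.center G21 :=
  mul_pow_mem_center closure_u_v u_mul_v_pow_five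

lemma index_zpowers_mem_Icc : (Subgroup.zpowers ((u * v) ^ 5)).index ∈ Set.Icc 1 60 := by
  have := zpowers_normal_of_mem_center u_mul_v_pow_five_mem_center
  let π := QuotientGroup.mk' (Subgroup.zpowers ((u * v) ^ 5))
  have hu : π u ^ 2 = 1 := by rw [← map_pow, u_sq, map_one]
  have huv : π (u * v) ^ 5 = 1 := by
    rw [← map_pow]
    exact (QuotientGroup.eq_one_iff _).2 (Subgroup.mem_zpowers _)
  have huuv : (π u * π (u * v)) ^ 3 = 1 := by
    rw [← map_mul, ← mul_assoc, ← sq, u_sq, one_mul, ← map_pow, v_pow_three, map_one]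
  refine IsIcosahedralPair.natCard_mem_Icc ⟨hu, huv, huuv⟩ ?_
  rw [← Set.image_pair, ← MonoidHom.map_closure, closure_pair_mul_right, closure_u_v]
  exact Subgroup.map_top_of_surjective π (QuotientGroup.mk'_surjective _)

lemma sixty_dvd_index_zpowers : 60 ∣ (Subgroup.zpowers ((u * v) ^ 5)).index := by
  obtain ⟨f, hu, hv⟩ := exists_hom (a := alternatingU) (b := alternatingV) (by decide +kernel)
    (by decide +kernel) (by decide +kernel)
  have hsurj : f.range = ⊤ := by
    rw [MonoidHom.range_eq_map, ← closure_u_v, MonoidHom.map_closure, Set.image_pair, hu, hv,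
      closure_alternatingU_alternatingV]
  have hker : Subgroup.zpowers ((u * v) ^ 5) ≤ f.ker := by
    rw [Subgroup.zpowers_le, MonoidHom.mem_ker, map_pow, map_mul, hu, hv]
    exact orderOf_dvd_iff_pow_eq_one.1 orderOf_alternatingU_mul_alternatingV.dvd
  have hindex : f.ker.index = 60 := by
    rw [Subgroup.index_ker, hsurj, Subgroup.card_top, natCard_alternatingGroup_five]
  exact hindex ▸ Subgroup.index_dvd_of_le hker

theorem index_zpowers : (Subgroup.zpowers ((u * v) ^ 5)).index = 60 := by
  obtain ⟨hpos, hle⟩ := index_zpowers_mem_Icc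
  exact le_antisymm hle (Nat.le_of_dvd hpos sixty_dvd_index_zpowers)

lemma u_mul_v_pow_sixty : (u * v) ^ 60 = 1 := by
  have hcenter : (Subgroup.center G21).index ∣ 60 :=
    index_zpowers ▸ Subgroup.index_dvd_of_le (Subgroup.zpowers_le.2 u_mul_v_pow_five_mem_center)
  have hu : u ^ 60 = 1 := by rw [show 60 = 2 * 30 from rfl, pow_mul, u_sq, one_pow]
  have hv : v ^ 60 = 1 := by rw [show 60 = 3 * 20 from rfl, pow_mul, v_pow_three, one_pow]
  rw [mul_pow_of_index_center_dvd hcenter, hu, hv, one_mul]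

theorem orderOf_u_mul_v_pow_five : orderOf ((u * v) ^ 5) = 12 := by
  refine Nat.dvd_antisymm (orderOf_dvd_of_pow_eq_one ?_) ?_
  · rw [← pow_mul, u_mul_v_pow_sixty]
  · obtain ⟨f, hu, hv⟩ := exists_hom (a := reflectionU) (b := reflectionV) (by decide +kernel)
      (by decide +kernel) (by decide +kernel)
    have := orderOf_map_dvd f ((u * v) ^ 5)
    rwa [map_pow, map_mul, hu, hv, orderOf_reflectionU_mul_reflectionV_pow_five] at this

end G21

/-- The group `⟨u, v | (u v)^5 = (v u)^5, u² = 1, v³ = 1⟩` (i.e. `G₂₁`)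
is a finite group of order 720. -/
theorem stmt7 : Finite G21 ∧ Nat.card G21 = 720 := by
  have hcard : Nat.card G21 = 720 := by
    rw [← Subgroup.card_mul_index (Subgroup.zpowers ((G21.u * G21.v) ^ 5)), Nat.card_zpowers,
      G21.orderOf_u_mul_v_pow_five, G21.index_zpowers]
  exact ⟨Nat.finite_of_card_ne_zero (by rw [hcard]; norm_num), hcard⟩
end
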